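/- Let R be a left Noetherian ring. The following are equivalent: (1) R has a left Artinian left quotient ring Q = C⁻¹R; (2) R is n-reflective (i.e. C' = C) and the following hold: (a) R̄ is a left Goldie ring, (b) n is a nilpotent ideal, (d) for every 1 ≤ i ≤ ν the left R̄-module f_i contains no infinite direct sum of nonzero submodules, and (e) for every c̄ ∈ C̄ the right multiplication map f_i → f_i, f ↦ f·c̄, is injective. -/

import Mathlib

open Function

universe u v

/-- A regular element of a ring: a two-sided non-zero-divisor. -/
def IsRegElem {R : Type*} [Ring R] (c : R) : Prop :=
  (∀ x : R, c * x = 0 → x = 0) ∧ (∀ x : R, x * c = 0 → x = 0)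

/-- The set `C` of regular elements of a ring. -/
def regSet (R : Type*) [Ring R] : Set R := {c : R | IsRegElem c}

/-- A (left) ideal is two-sided. -/
def Ideal.IsTwoSidedNC {R : Type*} [Ring R] (I : Ideal R) : Prop :=
  ∀ a ∈ I, ∀ r : R, a * r ∈ I

/-- A prime (two-sided) ideal of a possibly noncommutative ring. -/
def Ideal.IsPrimeNC {R : Type*} [Ring R] (P : Ideal R) : Prop :=
  P ≠ ⊤ ∧ P.IsTwoSidedNC ∧ ∀ a b : R, (∀ r : R, a * r * b ∈ P) → a ∈ P ∨ b ∈ P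

/-- The prime radical `n` of a ring: the intersection of all prime ideals. -/
def primeRadical (R : Type*) [Ring R] : Ideal R := sInf {P : Ideal R | P.IsPrimeNC}

/-- `n` is a nilpotent ideal. -/
def IsNilpotentIdeal {R : Type*} [Ring R] (I : Ideal R) : Prop := ∃ k : ℕ, I ^ (k + 1) = ⊥

/-- `φ : R →+* Q` realizes `Q` as a left quotient ring `C⁻¹R` of `R`:  `R` embeds in `Q`,
every regular element of `R` becomes invertible in `Q`, and every element of `Q` has the
form `(φ c)⁻¹ * (φ r)` with `c` regular. -/
structure IsLeftQuotRing {R : Type u} {Q : Type v} [Ring R] [Ring Q] (φ : R →+* Q) : Prop where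
  inj : Function.Injective φ
  isUnit : ∀ c : R, IsRegElem c → IsUnit (φ c)
  denom : ∀ q : Q, ∃ c r : R, IsRegElem c ∧ φ c * q = φ r

/-- Data of a left quotient ring of `R`. -/
structure LeftQuotData (R : Type u) [Ring R] : Type (u + 1) where
  Q : Type u
  [instQ : Ring Q]
  φ : R →+* Q
  quot : IsLeftQuotRing φ

attribute [instance] LeftQuotData.instQ

/-- `R` has a left Artinian left quotient ring `Q = C⁻¹R`. -/
def HasArtinianLeftQuot (R : Type u) [Ring R] : Prop :=
  ∃ d : LeftQuotData R, IsArtinianRing d.Q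

/-- A subset of a ring is a left annihilator. -/
def IsLeftAnnihilatorSet {R : Type*} [Ring R] (A : Set R) : Prop :=
  ∃ S : Set R, A = {r : R | ∀ s ∈ S, r * s = 0}

/-- The ascending chain condition on left annihilators. -/
def ACCLeftAnnihilators (R : Type*) [Ring R] : Prop :=
  ∀ f : ℕ → Set R, (∀ i, IsLeftAnnihilatorSet (f i)) → (∀ i j, i ≤ j → f i ⊆ f j) →
    ∃ N, ∀ k, N ≤ k → f k = f N

/-- The module `M` contains no infinite direct sum of nonzero submodules. -/
def NoInfiniteIndepFamily (R : Type*) (M : Type*) [Ring R] [AddCommGroup M] [Module R M] : Prop :=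
  ¬ ∃ f : ℕ → Submodule R M, (∀ i, f i ≠ ⊥) ∧ iSupIndep f

/-- A left Goldie ring: ACC on left annihilators and no infinite direct sums of nonzero
left ideals. -/
def IsLeftGoldie (R : Type*) [Ring R] : Prop :=
  ACCLeftAnnihilators R ∧ NoInfiniteIndepFamily R R

/-- The subquotient `n^i/n^{i+1}` of `R` determined by the prime radical `n`. -/
abbrev grPiece (R : Type*) [Ring R] (i : ℕ) :=
  ↥(primeRadical R ^ i) ⧸
    (Submodule.comap (primeRadical R ^ i : Ideal R).subtype (primeRadical R ^ (i + 1)))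

/-- The class of `x ∈ n^i` in `n^i/n^{i+1}`. -/
def grMk {R : Type*} [Ring R] (i : ℕ) (x : R) (hx : x ∈ primeRadical R ^ i) : grPiece R i :=
  Submodule.Quotient.mk ⟨x, hx⟩

/-- The `C̄`-torsion submodule `τ_i` of `n^i/n^{i+1}` (take the span, which coincides with the
set of torsion elements whenever the latter is a submodule, e.g. when `C̄` is a left Ore set);
here `C̄` is represented through `π : R → R̄` as `{c : R | IsRegElem (π c)}`. -/
def tauSub {R : Type u} {Rbar : Type v} [Ring R] [Ring Rbar] (π : R →+* Rbar) (i : ℕ) :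
    Submodule R (grPiece R i) :=
  Submodule.span R {u : grPiece R i | ∃ c : R, IsRegElem (π c) ∧ c • u = 0}

/-- The `C̄`-torsionfree module `f_i = (n^i/n^{i+1})/τ_i`. -/
abbrev fMod {R : Type u} {Rbar : Type v} [Ring R] [Ring Rbar] (π : R →+* Rbar) (i : ℕ) :=
  grPiece R i ⧸ tauSub π i

/-- The class of `x ∈ n^i` in `f_i`. -/
def fMk {R : Type u} {Rbar : Type v} [Ring R] [Ring Rbar] (π : R →+* Rbar) (i : ℕ) (x : R)
    (hx : x ∈ primeRadical R ^ i) : fMod π i :=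
  Submodule.Quotient.mk (grMk i x hx)

/-- The subset `C⁻¹K = {(φ c)⁻¹ (φ a) : c ∈ C, a ∈ K}` of a left quotient ring. -/
def locSet {R : Type u} {Q : Type v} [Ring R] [Ring Q] (φ : R →+* Q) (K : Ideal R) : Set Q :=
  {q : Q | ∃ c a : R, IsRegElem c ∧ a ∈ K ∧ φ c * q = φ a}

/-- A subset of a ring is a left Ore set (multiplicatively closed and satisfying the left
Ore condition). -/
def IsLeftOreSubset {A : Type*} [Ring A] (S : Set A) : Prop :=
  (1 : A) ∈ S ∧ (∀ s ∈ S, ∀ t ∈ S, s * t ∈ S) ∧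
    ∀ s ∈ S, ∀ a : A, ∃ t ∈ S, ∃ b : A, t * a = b * s

/-- A left denominator set. -/
def IsLeftDenominatorSet {A : Type*} [Ring A] (S : Set A) : Prop :=
  IsLeftOreSubset S ∧ ∀ a : A, ∀ s ∈ S, a * s = 0 → ∃ t ∈ S, t * a = 0

/-! ### Semiprime left Noetherian rings -/

/-- An injective endomorphism of a Noetherian module has essential range. -/
theorem LinearMap.exists_smul_ne_zero_mem_range {S M : Type*} [Ring S] [AddCommGroup M]
    [Module S M] [IsNoetherian S M] (f : M →ₗ[S] M) (hf : Injective f) {x : M} (hx : x ≠ 0) :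
    ∃ r : S, r • x ≠ 0 ∧ r • x ∈ LinearMap.range f := by
  by_contra! h
  have hinj : Injective (f.coprod (Submodule.span S {x}).subtype) := by
    rw [← LinearMap.ker_eq_bot, LinearMap.ker_eq_bot']
    rintro ⟨m, k, hk⟩ hmk
    obtain ⟨r, rfl⟩ := Submodule.mem_span_singleton.1 hk
    have hsum : f m + r • x = 0 := by simpa using hmk
    have hr : r • x = 0 := by
      by_contra hne
      exact h r hne ⟨-m, by rw [map_neg, eq_comm, ← add_eq_zero_iff_eq_neg']; exact hsum⟩
    have hm : m = 0 := by
      apply hf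
      rw [hr, add_zero] at hsum
      simpa using hsum
    simp [hm, hr]
  have := IsNoetherian.subsingleton_of_prod_injective _ hinj
  have h0 : (⟨x, Submodule.mem_span_singleton_self x⟩ : Submodule.span S {x}) = 0 :=
    Subsingleton.elim _ _
  exact hx (congrArg Subtype.val h0)

/-- The left annihilator of an element. -/
def leftAnn {S : Type*} [Ring S] (a : S) : Ideal S :=
  LinearMap.ker (LinearMap.toSpanSingleton S S a)

theorem mem_leftAnn {S : Type*} [Ring S] {a r : S} : r ∈ leftAnn a ↔ r * a = 0 := by
  simp [leftAnn]

/-- A ring is semiprime if `a S a = 0` implies `a = 0`. -/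
def IsSemiprimeNC (S : Type*) [Ring S] : Prop :=
  ∀ a : S, (∀ x, a * x * a = 0) → a = 0

section Semiprime

variable {S : Type*} [Ring S] [IsNoetherianRing S]

/-- A semiprime left Noetherian ring has no nonzero nil principal right ideals. -/
theorem IsSemiprimeNC.eq_zero_of_nil (hS : IsSemiprimeNC S) {a : S}
    (ha : ∀ x, IsNilpotent (a * x)) : a = 0 := by
  by_contra hne
  obtain ⟨I, ⟨b, hb, ⟨x₀, rfl⟩, rfl⟩, hmax⟩ := set_has_maximal_iff_noetherian.2 ‹IsNoetherianRing S›
    {I : Ideal S | ∃ b : S, b ≠ 0 ∧ (∃ x, b = a * x) ∧ I = leftAnn b}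
    ⟨_, a, hne, ⟨1, (mul_one a).symm⟩, rfl⟩
  refine hb (hS _ fun x => ?_)
  set b := a * x₀ with hbdef
  have hnil : ∃ k, (b * x) ^ k = 0 := by
    obtain ⟨k, hk⟩ := ha (x₀ * x)
    exact ⟨k, by rw [hbdef, mul_assoc]; exact hk⟩
  classical
  have hk := Nat.find_spec hnil
  have hmin := fun m => Nat.find_min (m := m) hnil
  generalize Nat.find hnil = k at hk hmin
  match k, hk, hmin with
  | 0, hk, _ =>
    rw [pow_zero] at hk
    rw [← mul_one (b * x * b), hk, mul_zero]
  | 1, hk, _ =>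
    rw [pow_one] at hk
    rw [hk, zero_mul]
  | m + 2, hk, hmin =>
    have hpow : (b * x) ^ (m + 1) = b * (x * (b * x) ^ m) := by rw [pow_succ', mul_assoc]
    have hle : leftAnn b ≤ leftAnn ((b * x) ^ (m + 1)) := fun r hr => by
      rw [mem_leftAnn] at hr ⊢
      rw [hpow, ← mul_assoc, hr, zero_mul]
    have hnlt := hmax (leftAnn ((b * x) ^ (m + 1)))
      ⟨_, hmin _ (by lia), ⟨x₀ * (x * (b * x) ^ m), by rw [hpow, hbdef, mul_assoc]⟩, rfl⟩
    have heq := eq_of_le_of_not_lt hle hnlt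
    rw [← mem_leftAnn, heq, mem_leftAnn, ← pow_succ', hk]

/-- A nonzero left ideal of a semiprime left Noetherian ring contains `b ≠ 0` such that
`b` and `b ^ 2` have the same left annihilator. -/
theorem IsSemiprimeNC.exists_leftAnn_sq_le (hS : IsSemiprimeNC S) {I : Ideal S} (hI : I ≠ ⊥) :
    ∃ b ∈ I, b ≠ 0 ∧ leftAnn (b * b) ≤ leftAnn b := by
  obtain ⟨y, hyI, hy⟩ : ∃ y ∈ I, ¬ IsNilpotent y := by
    by_contra! h
    obtain ⟨y, hyI, hy⟩ := I.ne_bot_iff.1 hI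
    refine hy (hS.eq_zero_of_nil fun x => ?_)
    obtain ⟨k, hk⟩ := h (x * y) (I.mul_mem_left x hyI)
    refine ⟨k + 1, ?_⟩
    have hpow : ∀ m : ℕ, (y * x) ^ (m + 1) = y * (x * y) ^ m * x := by
      intro m
      induction m with
      | zero => simp
      | succ m ih => rw [pow_succ, ih, pow_succ]; simp only [mul_assoc]
    rw [hpow, hk, mul_zero, zero_mul]
  have hmono : Monotone fun k : ℕ => leftAnn (y ^ k) := monotone_nat_of_le_succ fun k r hr => by
    rw [mem_leftAnn] at hr ⊢
    rw [pow_succ, ← mul_assoc, hr, zero_mul]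
  obtain ⟨N, hN⟩ := monotone_stabilizes_iff_noetherian.2 ‹IsNoetherianRing S› ⟨_, hmono⟩
  refine ⟨y ^ (N + 1), ?_, fun h => hy ⟨_, h⟩, ?_⟩
  · rw [pow_succ]
    exact I.mul_mem_left _ hyI
  · rw [← pow_add]
    exact ((hN (N + 1 + (N + 1)) (by lia)).symm.trans (hN (N + 1) (by lia))).le

/-- In a semiprime left Noetherian ring, an element with essential left annihilator is zero. -/
theorem IsSemiprimeNC.eq_zero_of_essential_leftAnn (hS : IsSemiprimeNC S) {a : S}
    (ha : ∀ y : S, y ≠ 0 → ∃ r, r * y ≠ 0 ∧ r * y ∈ leftAnn a) : a = 0 := by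
  refine hS.eq_zero_of_nil fun x => ?_
  set z := a * x with hz
  have hmono : Monotone fun k : ℕ => leftAnn (z ^ k) := monotone_nat_of_le_succ fun k r hr => by
    rw [mem_leftAnn] at hr ⊢
    rw [pow_succ, ← mul_assoc, hr, zero_mul]
  obtain ⟨N, hN⟩ := monotone_stabilizes_iff_noetherian.2 ‹IsNoetherianRing S› ⟨_, hmono⟩
  refine ⟨N, ?_⟩
  by_contra hne
  obtain ⟨r, hr, hra⟩ := ha _ hne
  rw [mem_leftAnn] at hra
  have hmem : r ∈ leftAnn (z ^ (N + 1)) := by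
    rw [mem_leftAnn, pow_succ, ← mul_assoc]
    nth_rewrite 2 [hz]
    rw [← mul_assoc, hra, zero_mul]
  have heq : leftAnn (z ^ N) = leftAnn (z ^ (N + 1)) := hN (N + 1) (by lia)
  rw [← heq, mem_leftAnn] at hmem
  exact hr hmem

/-- In a left Noetherian ring, the left ideal generated by a right-cancellable element is
essential. -/
theorem exists_mul_ne_zero_mul_eq {c : S} (hc : ∀ x : S, x * c = 0 → x = 0) {y : S} (hy : y ≠ 0) :
    ∃ r b : S, r * y ≠ 0 ∧ r * y = b * c := by
  have hinj : Injective (LinearMap.toSpanSingleton S S c) := by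
    rw [← LinearMap.ker_eq_bot, LinearMap.ker_eq_bot']
    exact fun x hx => hc x (by simpa using hx)
  obtain ⟨r, hr, b, hb⟩ := LinearMap.exists_smul_ne_zero_mem_range _ hinj hy
  exact ⟨r, b, hr, by simpa using hb.symm⟩

/-- **Goldie's theorem**: an essential left ideal of a semiprime left Noetherian ring contains a
regular element. -/
theorem IsSemiprimeNC.exists_isRegElem_mem (hS : IsSemiprimeNC S) (E : Ideal S)
    (hE : ∀ y : S, y ≠ 0 → ∃ r, r * y ≠ 0 ∧ r * y ∈ E) : ∃ c ∈ E, IsRegElem c := by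
  obtain ⟨L, ⟨hLE, a, haL, hLa⟩, hmax⟩ := set_has_maximal_iff_noetherian.2 ‹IsNoetherianRing S›
    {L : Ideal S | L ≤ E ∧ ∃ a ∈ L, ∀ x ∈ L, x * a = 0 → x = 0}
    ⟨⊥, bot_le, 0, zero_mem _, fun x hx _ => by simpa using hx⟩
  have hleft : ∀ x : S, x * a = 0 → x = 0 := by
    have hbot : E ⊓ leftAnn a = ⊥ := by
      by_contra hne
      obtain ⟨b, ⟨hbE, hba⟩, hb, hbb⟩ := hS.exists_leftAnn_sq_le hne
      replace hba : b * a = 0 := mem_leftAnn.1 hba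
      have hsq : ∀ r, r * b * b = 0 → r * b = 0 := fun r hr =>
        mem_leftAnn.1 (hbb (mem_leftAnn.2 (by rwa [← mul_assoc])))
      refine hmax (L ⊔ Ideal.span {b}) ⟨sup_le hLE ?_, a + b, ?_, ?_⟩ ?_
      · rwa [Ideal.span_singleton_le_iff_mem]
      · exact add_mem (Ideal.mem_sup_left haL)
          (Ideal.mem_sup_right (Ideal.mem_span_singleton_self b))
      · intro x hx hxab
        have hxa : x * a = 0 := by
          have h1 : x * a + x * b = 0 := by rw [← mul_add, hxab]
          have h2 : x * a * a = 0 := by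
            have h3 : (x * a + x * b) * a = 0 := by rw [h1, zero_mul]
            rwa [add_mul, mul_assoc x b a, hba, mul_zero, add_zero] at h3
          exact hLa _ (Ideal.mul_mem_left L x haL) h2
        have hxb : x * b = 0 := by rwa [mul_add, hxa, zero_add] at hxab
        obtain ⟨l, hl, z, hz, rfl⟩ := Submodule.mem_sup.1 hx
        obtain ⟨r, rfl⟩ := Ideal.mem_span_singleton'.1 hz
        have hl0 : l = 0 := by
          refine hLa l hl ?_
          rwa [add_mul, mul_assoc r b a, hba, mul_zero, add_zero] at hxa
        subst hl0
        rw [zero_add] at hxb ⊢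
        exact hsq r hxb
      · refine lt_of_le_of_ne le_sup_left fun h => hb (hLa b ?_ hba)
        rw [h]
        exact Ideal.mem_sup_right (Ideal.mem_span_singleton_self b)
    intro x hx
    by_contra hne
    obtain ⟨r, hr, hrE⟩ := hE x hne
    have hmem : r * x ∈ E ⊓ leftAnn a :=
      ⟨hrE, mem_leftAnn.2 (by rw [mul_assoc, hx, mul_zero])⟩
    rw [hbot] at hmem
    exact hr (by simpa using hmem)
  refine ⟨a, hLE haL, fun x hx => hS.eq_zero_of_essential_leftAnn fun y hy => ?_, hleft⟩
  obtain ⟨r, b, hr, hrb⟩ := exists_mul_ne_zero_mul_eq hleft hy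
  exact ⟨r, hr, mem_leftAnn.2 (by rw [hrb, mul_assoc, hx, mul_zero])⟩

end Semiprime

/-! ### The prime radical -/

theorem IsRegElem.one {S : Type*} [Ring S] : IsRegElem (1 : S) :=
  ⟨fun x hx => by simpa using hx, fun x hx => by simpa using hx⟩

theorem IsRegElem.mul {S : Type*} [Ring S] {a b : S} (ha : IsRegElem a) (hb : IsRegElem b) :
    IsRegElem (a * b) :=
  ⟨fun x hx => hb.1 x (ha.1 _ (by rw [← mul_assoc, hx])),
    fun x hx => ha.2 x (hb.2 _ (by rw [mul_assoc, hx]))⟩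

theorem IsUnit.isRegElem {S : Type*} [Ring S] {u : S} (hu : IsUnit u) : IsRegElem u :=
  ⟨fun _ hx => hu.mul_right_eq_zero.1 hx, fun _ hx => hu.mul_left_eq_zero.1 hx⟩

instance primeRadical.isTwoSided (R : Type*) [Ring R] : (primeRadical R).IsTwoSided where
  mul_mem_of_left b ha := by
    rw [primeRadical, Submodule.mem_sInf] at ha ⊢
    exact fun P hP => hP.2.1 _ (ha P hP) b

/-- In a left Noetherian ring every two-sided ideal contains a power of the prime radical. -/
theorem exists_primeRadical_pow_le {R : Type*} [Ring R] [IsNoetherianRing R] (I : Ideal R)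
    (hI : I.IsTwoSidedNC) : ∃ k, primeRadical R ^ k ≤ I := by
  induction I using IsNoetherian.induction with
  | hgt I ih =>
  by_cases htop : I = ⊤
  · exact ⟨0, htop ▸ le_top⟩
  by_cases hprime : Ideal.IsPrimeNC I
  · exact ⟨1, by rw [Submodule.pow_one]; exact sInf_le hprime⟩
  obtain ⟨a, b, hab, haI, hbI⟩ : ∃ a b : R, (∀ r, a * r * b ∈ I) ∧ a ∉ I ∧ b ∉ I := by
    by_contra! h
    exact hprime ⟨htop, hI, fun a b hab => or_iff_not_imp_left.2 (h a b hab)⟩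
  let A : Ideal R :=
    { carrier := {x | ∀ r, x * r * b ∈ I}
      add_mem' := fun hx hy r => by rw [add_mul, add_mul]; exact I.add_mem (hx r) (hy r)
      zero_mem' := fun r => by simp
      smul_mem' := fun s x hx r => by
        rw [smul_eq_mul, mul_assoc s, mul_assoc s]; exact Ideal.mul_mem_left I s (hx r) }
  let B : Ideal R :=
    { carrier := {y | ∀ x ∈ A, x * y ∈ I}
      add_mem' := fun hx hy r hr => by rw [mul_add]; exact I.add_mem (hx r hr) (hy r hr)
      zero_mem' := fun r _ => by simp
      smul_mem' := fun s y hy x hx => by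
        rw [smul_eq_mul, ← mul_assoc]
        exact hy _ fun r => by rw [mul_assoc x]; exact hx _ }
  have hIA : I ≤ A := fun x hx r => hI _ (hI _ hx r) b
  have hIB : I ≤ B := fun y hy x _ => Ideal.mul_mem_left I x hy
  obtain ⟨k, hk⟩ := ih A (lt_of_le_of_ne hIA fun h => haI (h ▸ hab))
    fun x hx s r => by rw [mul_assoc x]; exact hx _
  have hbB : b ∈ B := fun x hx => by simpa using hx 1
  obtain ⟨l, hl⟩ := ih B (lt_of_le_of_ne hIB fun h => hbI (h ▸ hbB))
    fun y hy s x hx => by rw [← mul_assoc]; exact hI _ (hy x hx) s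
  refine ⟨k + l, ?_⟩
  rw [Ideal.IsTwoSided.pow_add]
  exact (Ideal.mul_mono hk hl).trans (Ideal.mul_le.2 fun x hx y hy => hy x hx)

/-- The prime radical of a left Noetherian ring is nilpotent. -/
theorem isNilpotentIdeal_primeRadical (R : Type*) [Ring R] [IsNoetherianRing R] :
    IsNilpotentIdeal (primeRadical R) := by
  obtain ⟨k, hk⟩ := exists_primeRadical_pow_le (⊥ : Ideal R) fun a ha r => by
    rw [Submodule.mem_bot] at ha ⊢
    rw [ha, zero_mul]
  exact ⟨k, le_bot_iff.1 ((Ideal.pow_le_pow_right k.le_succ).trans hk)⟩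

/-- Nilpotent two-sided ideals are contained in the prime radical. -/
theorem Ideal.le_primeRadical_of_pow_le_bot {R : Type*} [Ring R] (K : Ideal R) [K.IsTwoSided]
    {k : ℕ} (hK : K ^ k ≤ ⊥) : K ≤ primeRadical R := by
  refine le_sInf fun P hP => ?_
  have hpow : K ^ k ≤ P := hK.trans bot_le
  clear hK
  induction k with
  | zero =>
    rw [Submodule.pow_zero, Ideal.one_eq_top, top_le_iff] at hpow
    exact absurd hpow hP.1
  | succ k ih =>
    by_contra hKP
    obtain ⟨b, hbK, hbP⟩ := SetLike.not_le_iff_exists.1 hKP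
    refine hKP (ih fun a ha => (hP.2.2 a b fun r => hpow ?_).resolve_right hbP)
    rw [Submodule.pow_succ]
    exact Ideal.mul_mem_mul (Ideal.mul_mem_right r _ ha) hbK

section Quotient

variable {R : Type*} [Ring R] {Rbar : Type*} [Ring Rbar] {π : R →+* Rbar}

theorem isSemiprimeNC_of_ker_eq_primeRadical (hsurj : Surjective π)
    (hker : RingHom.ker π = primeRadical R) : IsSemiprimeNC Rbar := by
  intro a ha
  obtain ⟨a, rfl⟩ := hsurj a
  rw [← RingHom.mem_ker, hker, primeRadical, Submodule.mem_sInf]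
  intro P hP
  refine (or_self_iff).1 (hP.2.2 a a fun r => ?_)
  have hmem : a * r * a ∈ primeRadical R := by
    rw [← hker, RingHom.mem_ker, map_mul, map_mul]
    exact ha _
  exact (sInf_le hP : primeRadical R ≤ P) hmem

variable [IsNoetherianRing R]

/-- A left ideal which is essential modulo the prime radical contains an element which is regular
modulo the prime radical. -/
theorem exists_isRegElem_map_mem (hsurj : Surjective π) (hker : RingHom.ker π = primeRadical R)
    (E : Ideal R) (hE : ∀ y ∉ primeRadical R, ∃ r, r * y ∉ primeRadical R ∧ r * y ∈ E) :
    ∃ c ∈ E, IsRegElem (π c) := by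
  have := isNoetherianRing_of_surjective R Rbar π hsurj
  obtain ⟨c, hcE, hc⟩ := (isSemiprimeNC_of_ker_eq_primeRadical hsurj hker).exists_isRegElem_mem
    (E.map π) fun y hy => by
      obtain ⟨y, rfl⟩ := hsurj y
      rw [Ne, ← RingHom.mem_ker, hker] at hy
      obtain ⟨r, hr, hrE⟩ := hE y hy
      rw [← hker, RingHom.mem_ker, map_mul] at hr
      exact ⟨π r, hr, by rw [← map_mul]; exact Ideal.mem_map_of_mem π hrE⟩
  obtain ⟨e, heE, rfl⟩ := (Ideal.mem_map_iff_of_surjective π hsurj).1 hcE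
  exact ⟨e, heE, hc⟩

/-- An injective endomorphism of a Noetherian module killed by the prime radical has torsion
cokernel. -/
theorem exists_isRegElem_smul_mem_range (hsurj : Surjective π)
    (hker : RingHom.ker π = primeRadical R) {M : Type*} [AddCommGroup M] [Module R M]
    [IsNoetherian R M] (hM : ∀ r ∈ primeRadical R, ∀ m : M, r • m = 0) (f : M →ₗ[R] M)
    (hf : Injective f) (x : M) : ∃ d : R, IsRegElem (π d) ∧ d • x ∈ LinearMap.range f := by
  obtain ⟨d, hd, hreg⟩ := exists_isRegElem_map_mem hsurj hker
    ((LinearMap.range f).comap (LinearMap.toSpanSingleton R M x)) fun y hy => by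
      by_cases hyx : y • x = 0
      · exact ⟨1, by rwa [one_mul], by simp [hyx]⟩
      obtain ⟨r, hr, hrf⟩ := f.exists_smul_ne_zero_mem_range hf hyx
      rw [← mul_smul] at hr hrf
      exact ⟨r, fun h => hr (hM _ h x), by simpa using hrf⟩
  exact ⟨d, hreg, by simpa using hd⟩

/-- The left Ore condition modulo the prime radical. -/
theorem exists_ore_mod_primeRadical (hsurj : Surjective π)
    (hker : RingHom.ker π = primeRadical R) (a : R) {c : R} (hc : IsRegElem (π c)) :
    ∃ d b : R, IsRegElem (π d) ∧ d * a - b * c ∈ primeRadical R := by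
  have := isNoetherianRing_of_surjective R Rbar π hsurj
  obtain ⟨d, hd, hreg⟩ := (isSemiprimeNC_of_ker_eq_primeRadical hsurj hker).exists_isRegElem_mem
    (Submodule.comap (LinearMap.toSpanSingleton Rbar Rbar (π a)) (Ideal.span {π c})) fun y hy => by
      by_cases hya : y * π a = 0
      · exact ⟨1, by rwa [one_mul], by simp [hya]⟩
      obtain ⟨r, b, hr, hrb⟩ := exists_mul_ne_zero_mul_eq hc.2 hya
      rw [← mul_assoc] at hr hrb
      exact ⟨r, fun h => hr (by rw [h, zero_mul]),
        by simpa [hrb] using Ideal.mem_span_singleton'.2 ⟨b, rfl⟩⟩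
  obtain ⟨b, hb⟩ := Ideal.mem_span_singleton'.1
    (show d * π a ∈ Ideal.span {π c} by simpa using hd)
  obtain ⟨d, rfl⟩ := hsurj d
  obtain ⟨b, rfl⟩ := hsurj b
  exact ⟨d, b, hreg, by rw [← hker, RingHom.mem_ker, map_sub, map_mul, map_mul, hb, sub_self]⟩

end Quotient

/-! ### The torsionfree graded pieces -/

section Graded

variable {R : Type u} [Ring R]

theorem grMk_eq_zero_iff {i : ℕ} {x : R} (hx : x ∈ primeRadical R ^ i) :
    grMk i x hx = 0 ↔ x ∈ primeRadical R ^ (i + 1) := by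
  rw [grMk, Submodule.Quotient.mk_eq_zero]
  exact Iff.rfl

theorem exists_grMk_eq {i : ℕ} (y : grPiece R i) : ∃ x hx, grMk i x hx = y := by
  obtain ⟨⟨x, hx⟩, rfl⟩ := Submodule.Quotient.mk_surjective _ y
  exact ⟨x, hx, rfl⟩

theorem smul_grPiece_eq_zero {i : ℕ} {r : R} (hr : r ∈ primeRadical R) (y : grPiece R i) :
    r • y = 0 := by
  obtain ⟨x, hx, rfl⟩ := exists_grMk_eq y
  refine (grMk_eq_zero_iff (Ideal.mul_mem_left _ r hx)).2 ?_
  rw [Ideal.IsTwoSided.pow_succ]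
  exact Ideal.mul_mem_mul hr hx

/-- Right multiplication by `c` on `n^i`. -/
def powMulRight (i : ℕ) (c : R) :
    ↥(primeRadical R ^ i) →ₗ[R] ↥(primeRadical R ^ i) where
  toFun x := ⟨x * c, Ideal.mul_mem_right c _ x.2⟩
  map_add' _ _ := Subtype.ext (add_mul _ _ _)
  map_smul' _ _ := Subtype.ext (mul_assoc _ _ _)

/-- Right multiplication by `c` on `n^i/n^{i+1}`. -/
def grMulRight (i : ℕ) (c : R) : grPiece R i →ₗ[R] grPiece R i :=
  Submodule.mapQ _ _ (powMulRight i c) fun x hx =>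
    show (x : R) * c ∈ primeRadical R ^ (i + 1) from Ideal.mul_mem_right c _ hx

variable {Rbar : Type v} [Ring Rbar] (π : R →+* Rbar)

/-- Right multiplication by `c` on `f_i`. -/
def fMulRight (i : ℕ) (c : R) : fMod π i →ₗ[R] fMod π i :=
  Submodule.mapQ _ _ (grMulRight i c) <| Submodule.span_le.2 fun y ⟨d, hd, hdy⟩ =>
    Submodule.subset_span ⟨d, hd, by rw [← map_smul, hdy, map_zero]⟩

variable {π}

theorem exists_fMk_eq {i : ℕ} (y : fMod π i) : ∃ x hx, fMk π i x hx = y := by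
  obtain ⟨y, rfl⟩ := Submodule.Quotient.mk_surjective _ y
  obtain ⟨x, hx, rfl⟩ := exists_grMk_eq y
  exact ⟨x, hx, rfl⟩

theorem smul_fMod_eq_zero {i : ℕ} {r : R} (hr : r ∈ primeRadical R) (y : fMod π i) :
    r • y = 0 := by
  obtain ⟨y, rfl⟩ := Submodule.Quotient.mk_surjective _ y
  rw [← Submodule.Quotient.mk_smul, smul_grPiece_eq_zero hr, Submodule.Quotient.mk_zero]

/-- The class of `x` in `f_i` vanishes iff `x` is torsion modulo `n^{i+1}`. -/
theorem fMk_eq_zero_iff (hsurj : Surjective π) (hker : RingHom.ker π = primeRadical R)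
    [IsNoetherianRing R] {i : ℕ} {x : R} (hx : x ∈ primeRadical R ^ i) :
    fMk π i x hx = 0 ↔ ∃ d : R, IsRegElem (π d) ∧ d * x ∈ primeRadical R ^ (i + 1) := by
  have hmul : ∀ d : R, d • grMk i x hx = 0 ↔ d * x ∈ primeRadical R ^ (i + 1) := fun d =>
    grMk_eq_zero_iff (Ideal.mul_mem_left _ d hx)
  have hzero : fMk π i x hx = 0 ↔ grMk i x hx ∈ tauSub π i := by
    rw [fMk, Submodule.Quotient.mk_eq_zero]
  have heq : ∀ {r s : R}, r - s ∈ primeRadical R → ∀ y : grPiece R i, r • y = s • y := by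
    intro r s hrs y
    rw [← sub_eq_zero, ← sub_smul, smul_grPiece_eq_zero hrs]
  rw [hzero]
  constructor
  · intro h
    suffices ∃ d : R, IsRegElem (π d) ∧ d • grMk i x hx = 0 by
      obtain ⟨d, hd, hdx⟩ := this
      exact ⟨d, hd, (hmul d).1 hdx⟩
    refine Submodule.span_induction (p := fun y _ => ∃ d : R, IsRegElem (π d) ∧ d • y = 0)
      (fun y hy => hy) ⟨1, by rw [map_one]; exact IsRegElem.one, smul_zero _⟩ ?_ ?_ h
    · rintro y z - - ⟨a, ha, hay⟩ ⟨b, hb, hbz⟩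
      obtain ⟨d, e, hd, hde⟩ := exists_ore_mod_primeRadical hsurj hker a hb
      refine ⟨d * a, by rw [map_mul]; exact hd.mul ha, ?_⟩
      rw [smul_add, heq hde z, mul_smul, hay, mul_smul, hbz, smul_zero, smul_zero, add_zero]
    · rintro r y - ⟨a, ha, hay⟩
      obtain ⟨d, e, hd, hde⟩ := exists_ore_mod_primeRadical hsurj hker r ha
      exact ⟨d, hd, by rw [← mul_smul, heq hde, mul_smul, hay, smul_zero]⟩
  · rintro ⟨d, hd, hdx⟩
    exact Submodule.subset_span ⟨d, hd, (hmul d).2 hdx⟩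

/-- The left Ore condition lifts from the quotient by the prime radical `n` to the quotients by
the powers of `n`. -/
theorem exists_ore_mod_pow [IsNoetherianRing R] (hsurj : Surjective π)
    (hker : RingHom.ker π = primeRadical R)
    (hinj : ∀ i : ℕ, 1 ≤ i → primeRadical R ^ i ≠ ⊥ →
      ∀ c : R, IsRegElem (π c) →
        ∀ (x : R) (hx : x ∈ primeRadical R ^ i) (hxc : x * c ∈ primeRadical R ^ i),
          fMk π i (x * c) hxc = 0 → fMk π i x hx = 0)
    (a : R) {c : R} (hc : IsRegElem (π c)) (i : ℕ) :
    ∃ d b : R, IsRegElem (π d) ∧ d * a - b * c ∈ primeRadical R ^ (i + 1) := by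
  induction i with
  | zero =>
    rw [zero_add, Submodule.pow_one]
    exact exists_ore_mod_primeRadical hsurj hker a hc
  | succ i ih =>
    obtain ⟨d, b, hd, hx⟩ := ih
    by_cases hbot : primeRadical R ^ (i + 1) = ⊥
    · refine ⟨d, b, hd, ?_⟩
      rw [hbot, Submodule.mem_bot] at hx
      rw [hx]
      exact zero_mem _
    have hf : Injective (fMulRight π (i + 1) c) := by
      rw [← LinearMap.ker_eq_bot, LinearMap.ker_eq_bot']
      intro y hy
      obtain ⟨x, hx, rfl⟩ := exists_fMk_eq y
      exact hinj (i + 1) (by lia) hbot c hc x hx _ hy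
    obtain ⟨d', hd', y, hy⟩ := exists_isRegElem_smul_mem_range hsurj hker
      (fun r hr m => smul_fMod_eq_zero hr m) _ hf (fMk π (i + 1) _ hx)
    obtain ⟨y, hyn, rfl⟩ := exists_fMk_eq y
    have hz : fMk π (i + 1) (d' * (d * a - b * c) - y * c)
        (sub_mem (Ideal.mul_mem_left _ d' hx) (Ideal.mul_mem_right c _ hyn)) = 0 :=
      sub_eq_zero.2 hy.symm
    obtain ⟨s, hs, hmem⟩ := (fMk_eq_zero_iff hsurj hker _).1 hz
    refine ⟨s * (d' * d), s * (d' * b + y), ?_, ?_⟩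
    · rw [map_mul, map_mul]
      exact hs.mul (hd'.mul hd)
    · convert hmem using 1
      noncomm_ring

end Graded

/-! ### Left quotient rings -/

namespace IsLeftQuotRing

variable {R : Type u} {Q : Type v} [Ring R] [Ring Q] {φ : R →+* Q}

theorem ore (h : IsLeftQuotRing φ) (a : R) {c : R} (hc : IsRegElem c) :
    ∃ d b : R, IsRegElem d ∧ d * a = b * c := by
  obtain ⟨u, hu⟩ := h.isUnit c hc
  obtain ⟨d, b, hd, hdb⟩ := h.denom (φ a * ↑u⁻¹)
  refine ⟨d, b, hd, h.inj ?_⟩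
  rw [← mul_assoc, Units.mul_inv_eq_iff_eq_mul, hu] at hdb
  rw [map_mul, map_mul, hdb]

theorem mem_of_map_mul_mem (h : IsLeftQuotRing φ) {c : R} (hc : IsRegElem c) {J : Ideal Q} {q : Q}
    (hq : φ c * q ∈ J) : q ∈ J :=
  (J.unit_mul_mem_iff_mem (h.isUnit c hc)).1 hq

theorem mem_map_iff (h : IsLeftQuotRing φ) {I : Ideal R} {q : Q} :
    q ∈ I.map φ ↔ ∃ c, IsRegElem c ∧ ∃ a ∈ I, φ c * q = φ a := by
  constructor
  · intro hq
    refine Submodule.span_induction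
      (p := fun q _ => ∃ c, IsRegElem c ∧ ∃ a ∈ I, φ c * q = φ a) ?_ ?_ ?_ ?_ hq
    · rintro _ ⟨a, ha, rfl⟩
      exact ⟨1, IsRegElem.one, a, ha, by simp⟩
    · exact ⟨1, IsRegElem.one, 0, zero_mem _, by simp⟩
    · rintro p q - - ⟨c, hc, a, ha, hca⟩ ⟨d, hd, b, hb, hdb⟩
      obtain ⟨s, t, hs, hst⟩ := h.ore c hd
      refine ⟨s * c, hs.mul hc, s * a + t * b,
        add_mem (I.mul_mem_left s ha) (I.mul_mem_left t hb), ?_⟩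
      rw [mul_add]
      nth_rewrite 2 [hst]
      simp only [map_mul, map_add, mul_assoc, hca, hdb]
    · rintro p q - ⟨c, hc, a, ha, hca⟩
      obtain ⟨d, r, hd, hdr⟩ := h.denom p
      obtain ⟨s, t, hs, hst⟩ := h.ore r hc
      refine ⟨s * d, hs.mul hd, t * a, I.mul_mem_left t ha, ?_⟩
      rw [smul_eq_mul, map_mul, mul_assoc, ← mul_assoc (φ d), hdr, ← mul_assoc, ← map_mul, hst,
        map_mul, map_mul, mul_assoc, hca]
  · rintro ⟨c, hc, a, ha, hca⟩
    exact h.mem_of_map_mul_mem hc (hca ▸ Ideal.mem_map_of_mem φ ha)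

theorem map_mem_map_iff (h : IsLeftQuotRing φ) {I : Ideal R} {x : R} :
    φ x ∈ I.map φ ↔ ∃ c, IsRegElem c ∧ c * x ∈ I := by
  rw [h.mem_map_iff]
  refine exists_congr fun c => and_congr_right fun _ => ?_
  constructor
  · rintro ⟨a, ha, hca⟩
    rw [← map_mul] at hca
    rwa [h.inj hca]
  · exact fun hcx => ⟨_, hcx, (map_mul φ c x).symm⟩

variable [IsNoetherianRing R]

theorem isNoetherianRing (h : IsLeftQuotRing φ) : IsNoetherianRing Q := by
  have hmono : StrictMono (Ideal.comap φ : Ideal Q → Ideal R) := by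
    refine (Monotone.strictMono_of_injective fun _ _ hIJ => Ideal.comap_mono hIJ) ?_
    have hle : ∀ I J : Ideal Q, I.comap φ = J.comap φ → I ≤ J := by
      intro I J hIJ q hq
      obtain ⟨c, r, hc, hcr⟩ := h.denom q
      refine h.mem_of_map_mul_mem hc ?_
      rw [hcr, ← Ideal.mem_comap, ← hIJ, Ideal.mem_comap, ← hcr]
      exact I.mul_mem_left _ hq
    exact fun I J hIJ => le_antisymm (hle I J hIJ) (hle J I hIJ.symm)
  have : WellFoundedGT (Ideal Q) := hmono.wellFoundedGT
  exact (isNoetherianRing_iff.trans isNoetherian_iff').2 this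

/-- In a left Noetherian ring, a left ideal stable under right multiplication by a unit is stable
under right multiplication by its inverse. -/
theorem _root_.Ideal.mem_of_mul_isUnit_mem {S : Type*} [Ring S] [IsNoetherianRing S] (J : Ideal S)
    {u : S} (hu : IsUnit u) (hJ : ∀ q ∈ J, q * u ∈ J) {q : S} (hq : q * u ∈ J) : q ∈ J := by
  let f : (S ⧸ J) →ₗ[S] S ⧸ J :=
    Submodule.mapQ J J (LinearMap.toSpanSingleton S S u) fun q hq => by simpa using hJ q hq
  have hsurj : Surjective f := by
    intro y
    obtain ⟨y, rfl⟩ := Submodule.Quotient.mk_surjective _ y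
    obtain ⟨u, rfl⟩ := hu
    exact ⟨Submodule.Quotient.mk (y * ↑u⁻¹), by simp [f]⟩
  have hinj := IsNoetherian.injective_of_surjective_endomorphism f hsurj
  rw [← Submodule.Quotient.mk_eq_zero J]
  refine hinj ?_
  rw [map_zero]
  exact (Submodule.Quotient.mk_eq_zero J).2 (by simpa using hq)

/-- If `I` is two-sided then so is the left ideal `Q I`, when `R` is left Noetherian. -/
theorem isTwoSided_map (h : IsLeftQuotRing φ) (I : Ideal R) [I.IsTwoSided] :
    (I.map φ).IsTwoSided := by
  have := h.isNoetherianRing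
  have hR : ∀ r : R, ∀ q ∈ I.map φ, q * φ r ∈ I.map φ := by
    intro r q hq
    obtain ⟨c, hc, a, ha, hca⟩ := h.mem_map_iff.1 hq
    exact h.mem_map_iff.2 ⟨c, hc, a * r, Ideal.mul_mem_right r _ ha, by
      rw [← mul_assoc, hca, map_mul]⟩
  refine ⟨fun {q} p hq => ?_⟩
  obtain ⟨d, r, hd, hdr⟩ := h.denom p
  obtain ⟨u, hu⟩ := h.isUnit d hd
  have hqu : q * ↑u⁻¹ ∈ I.map φ :=
    Ideal.mem_of_mul_isUnit_mem _ (h.isUnit d hd) (hR d) (by rwa [← hu, Units.inv_mul_cancel_right])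
  have hp : q * p = q * ↑u⁻¹ * φ r := by
    rw [← hdr, ← hu, mul_assoc, Units.inv_mul_cancel_left]
  rw [hp]
  exact hR r _ hqu

theorem map_mul_map_le (h : IsLeftQuotRing φ) (I K : Ideal R) [I.IsTwoSided] :
    I.map φ * K.map φ ≤ (I * K).map φ := by
  have := h.isTwoSided_map I
  refine Ideal.mul_le.2 fun q hq s hs => ?_
  refine Submodule.span_induction (p := fun s _ => ∀ q ∈ I.map φ, q * s ∈ (I * K).map φ)
    ?_ ?_ ?_ ?_ hs q hq
  · rintro _ ⟨b, hb, rfl⟩ q hq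
    obtain ⟨c, hc, a, ha, hca⟩ := h.mem_map_iff.1 hq
    exact h.mem_map_iff.2 ⟨c, hc, a * b, Ideal.mul_mem_mul ha hb, by
      rw [← mul_assoc, hca, map_mul]⟩
  · simp
  · intro x y _ _ hx hy q hq
    rw [mul_add]
    exact add_mem (hx q hq) (hy q hq)
  · intro p x _ hx q hq
    rw [smul_eq_mul, ← mul_assoc]
    exact hx _ (Ideal.mul_mem_right p _ hq)

theorem map_pow_le (h : IsLeftQuotRing φ) (I : Ideal R) [I.IsTwoSided] (k : ℕ) :
    I.map φ ^ k ≤ (I ^ k).map φ := by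
  induction k with
  | zero =>
    rw [Submodule.pow_zero, Submodule.pow_zero, Ideal.one_eq_top, Ideal.one_eq_top, Ideal.map_top]
  | succ k ih =>
    rw [Submodule.pow_succ, Submodule.pow_succ]
    exact (Ideal.mul_mono_left ih).trans (h.map_mul_map_le _ _)

theorem exists_map_primeRadical_pow_eq_bot (h : IsLeftQuotRing φ) :
    ∃ k, (primeRadical R).map φ ^ k = ⊥ := by
  obtain ⟨k, hk⟩ := isNilpotentIdeal_primeRadical R
  exact ⟨k + 1, le_bot_iff.1 ((h.map_pow_le _ _).trans (by rw [hk, Ideal.map_bot]))⟩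

theorem isNilpotent_of_mem_map_primeRadical (h : IsLeftQuotRing φ) {q : Q}
    (hq : q ∈ (primeRadical R).map φ) : IsNilpotent q := by
  obtain ⟨k, hk⟩ := h.exists_map_primeRadical_pow_eq_bot
  refine ⟨k, ?_⟩
  rw [← Submodule.mem_bot (R := Q), ← hk]
  exact Ideal.pow_mem_pow hq k

/-- The prime radical is the contraction of its extension to the left quotient ring. -/
theorem map_mem_map_primeRadical_iff (h : IsLeftQuotRing φ) {x : R} :
    φ x ∈ (primeRadical R).map φ ↔ x ∈ primeRadical R := by
  refine ⟨fun hx => ?_, Ideal.mem_map_of_mem φ⟩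
  have := h.isTwoSided_map (primeRadical R)
  obtain ⟨k, hk⟩ := h.exists_map_primeRadical_pow_eq_bot
  set J := (primeRadical R).map φ
  have hle : ∀ m : ℕ, J.comap φ ^ m ≤ (J ^ m).comap φ := by
    intro m
    induction m with
    | zero =>
      rw [Submodule.pow_zero J, Ideal.one_eq_top, Ideal.comap_top]
      exact le_top
    | succ m ih =>
      rw [Submodule.pow_succ, Submodule.pow_succ, Ideal.mul_le]
      intro r hr s hs
      rw [Ideal.mem_comap, map_mul]
      exact Ideal.mul_mem_mul (ih hr) hs
  refine Ideal.le_primeRadical_of_pow_le_bot (J.comap φ) (k := k) ((hle k).trans ?_) hx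
  rw [hk]
  intro y hy
  exact h.inj (by simpa using hy)

variable {Rbar : Type*} [Ring Rbar] {π : R →+* Rbar}

theorem isRegElem_map (h : IsLeftQuotRing φ) (hsurj : Surjective π)
    (hker : RingHom.ker π = primeRadical R) {c : R} (hc : IsRegElem c) : IsRegElem (π c) := by
  have := h.isNoetherianRing
  have := h.isTwoSided_map (primeRadical R)
  constructor
  all_goals
    intro x hx
    obtain ⟨x, rfl⟩ := hsurj x
    rw [← map_mul, ← RingHom.mem_ker, hker, ← h.map_mem_map_primeRadical_iff, map_mul] at hx
    rw [← RingHom.mem_ker, hker, ← h.map_mem_map_primeRadical_iff]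
  · exact h.mem_of_map_mul_mem hc hx
  · exact Ideal.mem_of_mul_isUnit_mem _ (h.isUnit c hc)
      (fun q hq => Ideal.mul_mem_right _ _ hq) hx

theorem isRegElem_of_map [IsArtinianRing Q] (h : IsLeftQuotRing φ)
    (hker : RingHom.ker π = primeRadical R) {c : R} (hc : IsRegElem (π c)) : IsRegElem c := by
  have := h.isTwoSided_map (primeRadical R)
  set J := (primeRadical R).map φ with hJ
  let f : (Q ⧸ J) →ₗ[Q] Q ⧸ J :=
    Submodule.mapQ J J (LinearMap.toSpanSingleton Q Q (φ c)) fun q hq => by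
      simpa using Ideal.mul_mem_right (φ c) J hq
  have hinj : Injective f := by
    rw [← LinearMap.ker_eq_bot, LinearMap.ker_eq_bot']
    intro y hy
    obtain ⟨q, rfl⟩ := Submodule.Quotient.mk_surjective _ y
    have hqc : q * φ c ∈ J := by simpa using (Submodule.Quotient.mk_eq_zero J).1 hy
    rw [Submodule.Quotient.mk_eq_zero]
    obtain ⟨d, r, hd, hdr⟩ := h.denom q
    refine h.mem_of_map_mul_mem hd ?_
    have hrc : φ (r * c) ∈ J := by
      rw [map_mul, ← hdr, mul_assoc]
      exact J.mul_mem_left _ hqc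
    rw [h.map_mem_map_primeRadical_iff, ← hker, RingHom.mem_ker, map_mul] at hrc
    rw [hdr, h.map_mem_map_primeRadical_iff, ← hker, RingHom.mem_ker]
    exact hc.2 _ hrc
  obtain ⟨y, hy⟩ := IsArtinian.surjective_of_injective_endomorphism f hinj
    (Submodule.Quotient.mk 1)
  obtain ⟨q, rfl⟩ := Submodule.Quotient.mk_surjective _ y
  have hmem : 1 - q * φ c ∈ J := by
    exact (Submodule.Quotient.eq J).1 hy.symm
  have hunit : IsUnit (q * φ c) := by
    simpa using (h.isNilpotent_of_mem_map_primeRadical hmem).isUnit_one_sub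
  obtain ⟨w, hw⟩ := hunit
  have hleft : ↑w⁻¹ * q * φ c = 1 := by rw [mul_assoc, ← hw, Units.inv_mul]
  have hu : IsRegElem (φ c) := (IsUnit.of_mul_eq_one_right _ hleft).isRegElem
  refine ⟨fun x hx => h.inj ?_, fun x hx => h.inj ?_⟩
  · rw [map_zero]
    exact hu.1 _ (by rw [← map_mul, hx, map_zero])
  · rw [map_zero]
    exact hu.2 _ (by rw [← map_mul, hx, map_zero])

theorem _root_.isSemisimpleRing_quotient {S : Type*} [Ring S] (I : Ideal S) [I.IsTwoSided]
    [hI : IsSemisimpleModule S (S ⧸ I)] : IsSemisimpleRing (S ⧸ I) := by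
  let e : (S ⧸ I) →ₛₗ[Ideal.Quotient.mk I] (S ⧸ I) :=
    { AddMonoidHom.id _ with
      map_smul' := fun r x => by
        obtain ⟨x, rfl⟩ := Ideal.Quotient.mk_surjective x
        rfl }
  have : RingHomSurjective (Ideal.Quotient.mk I) := ⟨Ideal.Quotient.mk_surjective⟩
  exact (e.isSemisimpleModule_iff_of_bijective Function.bijective_id).1 hI

/-- If every element regular modulo the prime radical is regular, then the left quotient ring of
a left Noetherian ring is left Artinian. -/
theorem isArtinianRing (h : IsLeftQuotRing φ) (hsurj : Surjective π)
    (hker : RingHom.ker π = primeRadical R) (href : ∀ c : R, IsRegElem (π c) → IsRegElem c) :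
    IsArtinianRing Q := by
  have := h.isNoetherianRing
  have := h.isTwoSided_map (primeRadical R)
  set J := (primeRadical R).map φ with hJ
  have hcompl : ∀ L : Ideal Q, J ≤ L → ∃ L', J ≤ L' ∧ L ⊓ L' ≤ J ∧ L ⊔ L' = ⊤ := by
    intro L hL
    obtain ⟨M, ⟨hnM, hM⟩, hmax⟩ := set_has_maximal_iff_noetherian.2 ‹IsNoetherianRing R›
      {M : Ideal R | primeRadical R ≤ M ∧ M ⊓ L.comap φ ≤ primeRadical R}
      ⟨primeRadical R, le_rfl, inf_le_left⟩
    refine ⟨Ideal.map φ M, Ideal.map_mono hnM, ?_, ?_⟩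
    · rintro q ⟨hqL, hqM⟩
      obtain ⟨c, hc, m, hm, hcm⟩ := h.mem_map_iff.1 hqM
      refine h.mem_of_map_mul_mem hc ?_
      rw [hcm]
      refine Ideal.mem_map_of_mem φ (hM ⟨hm, ?_⟩)
      change φ m ∈ L
      rw [← hcm]
      exact L.mul_mem_left _ hqL
    · obtain ⟨c, hcE, hc⟩ := exists_isRegElem_map_mem hsurj hker (M ⊔ L.comap φ) fun y hy => by
        by_contra! hr
        have hr' : ∀ r, r * y ∈ M ⊔ L.comap φ → r * y ∈ primeRadical R := fun r hrE => by
          by_contra hne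
          exact hr r hne hrE
        have hyM : y ∉ M := fun hyM => hy (by
          simpa using hr' 1 (by simpa using Ideal.mem_sup_left hyM))
        refine hmax (M ⊔ Ideal.span {y}) ⟨hnM.trans le_sup_left, ?_⟩ ?_
        · rintro x ⟨hx, hxL⟩
          obtain ⟨m, hm, z, hz, rfl⟩ := Submodule.mem_sup.1 hx
          obtain ⟨r, rfl⟩ := Ideal.mem_span_singleton'.1 hz
          have hry : r * y ∈ primeRadical R := hr' r (by
            have hmE : m ∈ M ⊔ L.comap φ := Ideal.mem_sup_left hm
            have hxE : m + r * y ∈ M ⊔ L.comap φ := Ideal.mem_sup_right hxL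
            simpa using sub_mem hxE hmE)
          exact hM ⟨add_mem hm (hnM hry), hxL⟩
        · refine lt_of_le_of_ne le_sup_left fun heq => hyM ?_
          rw [heq]
          exact Ideal.mem_sup_right (Ideal.mem_span_singleton_self y)
      refine Ideal.eq_top_of_isUnit_mem _ ?_ (h.isUnit c (href c hc))
      obtain ⟨m, hm, l, hl, rfl⟩ := Submodule.mem_sup.1 hcE
      rw [map_add]
      exact add_mem (Ideal.mem_sup_right (Ideal.mem_map_of_mem φ hm)) (Ideal.mem_sup_left hl)
  have hss : IsSemisimpleModule Q (Q ⧸ J) := by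
    rw [isSemisimpleModule_iff, (Submodule.comapMkQRelIso J).complementedLattice_iff]
    refine ⟨fun ⟨L, hL⟩ => ?_⟩
    obtain ⟨L', hJL', hinf, hsup⟩ := hcompl L hL
    exact ⟨⟨L', hJL'⟩, Set.Ici.isCompl_iff.2
      ⟨le_antisymm hinf (le_inf hL hJL'), codisjoint_iff.2 hsup⟩⟩
  have hJac : Ring.jacobson Q = J := by
    refine le_antisymm ?_ ?_
    · exact Module.jacobson_le_of_eq_bot (IsSemisimpleModule.jacobson_eq_bot Q (Q ⧸ J))
    · rw [Ring.jacobson_eq_sInf_isMaximal]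
      refine le_sInf fun m hm => ?_
      by_contra hle
      obtain ⟨x, hxJ, hxm⟩ := SetLike.not_le_iff_exists.1 hle
      obtain ⟨y, i, hi, hyi⟩ := hm.exists_inv hxm
      refine hm.ne_top (Ideal.eq_top_of_isUnit_mem m hi ?_)
      rw [← eq_sub_iff_add_eq'] at hyi
      rw [hyi]
      exact (h.isNilpotent_of_mem_map_primeRadical (J.mul_mem_left y hxJ)).isUnit_one_sub
  have hsemi : IsSemiprimaryRing Q := by
    refine ⟨?_, ?_⟩
    · rw [← hJac] at hss
      exact isSemisimpleRing_quotient _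
    · rw [hJac]
      exact h.exists_map_primeRadical_pow_eq_bot
  exact IsSemiprimaryRing.isNoetherian_iff_isArtinian.1 ‹_›

end IsLeftQuotRing

/-! ### The criterion -/

theorem noInfiniteIndepFamily_of_isNoetherian (R M : Type*) [Ring R] [AddCommGroup M] [Module R M]
    [IsNoetherian R M] : NoInfiniteIndepFamily R M := by
  rintro ⟨f, hne, hind⟩
  have hfin := WellFoundedGT.finite_ne_bot_of_iSupIndep hind
  simp only [hne, ne_eq, not_false_eq_true, Set.ofPred_true] at hfin
  exact Set.infinite_univ hfin

theorem accLeftAnnihilators_of_isNoetherianRing (R : Type*) [Ring R] [IsNoetherianRing R] :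
    ACCLeftAnnihilators R := by
  intro f hf hmono
  have hI : ∀ i, ∃ I : Ideal R, (I : Set R) = f i := by
    intro i
    obtain ⟨S, hS⟩ := hf i
    refine ⟨{ carrier := f i, add_mem' := ?_, zero_mem' := ?_, smul_mem' := ?_ }, rfl⟩
    · intro a b ha hb
      rw [hS] at *
      intro s hs
      rw [add_mul, ha s hs, hb s hs, add_zero]
    · rw [hS]
      exact fun s _ => zero_mul s
    · intro r a ha
      rw [hS] at *
      intro s hs
      rw [smul_eq_mul, mul_assoc, ha s hs, mul_zero]
  choose I hI using hI
  obtain ⟨N, hN⟩ := monotone_stabilizes_iff_noetherian.2 ‹IsNoetherianRing R›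
    ⟨I, fun i j hij => by
      rw [← SetLike.coe_subset_coe, hI, hI]
      exact hmono i j hij⟩
  exact ⟨N, fun k hk => by
    rw [← hI, ← hI]
    exact congrArg _ (hN k hk).symm⟩

theorem isLeftGoldie_of_isNoetherianRing (R : Type*) [Ring R] [IsNoetherianRing R] :
    IsLeftGoldie R :=
  ⟨accLeftAnnihilators_of_isNoetherianRing R, noInfiniteIndepFamily_of_isNoetherian R R⟩

/-- A ring whose regular elements satisfy the left Ore condition has a left quotient ring. -/
theorem nonempty_leftQuotData_of_ore {R : Type u} [Ring R]
    (hore : ∀ a c : R, IsRegElem c → ∃ d b : R, IsRegElem d ∧ d * a = b * c) :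
    Nonempty (LeftQuotData R) := by
  have hmem : ∀ c : R, c ∈ nonZeroDivisors R ↔ IsRegElem c := fun _ => mem_nonZeroDivisors_iff
  choose! d b hd hdb using hore
  let _ : OreLocalization.OreSet (nonZeroDivisors R) :=
    { ore_right_cancel := fun r₁ r₂ s hs => ⟨1, by
        rw [← sub_eq_zero, ← sub_mul] at hs
        rw [sub_eq_zero.1 (((hmem s).1 s.2).2 _ hs)]⟩
      oreNum := fun r s => b r s
      oreDenom := fun r s => ⟨d r s, (hmem _).2 (hd r s ((hmem s).1 s.2))⟩
      ore_eq := fun r s => hdb r s ((hmem s).1 s.2) }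
  refine ⟨⟨OreLocalization (nonZeroDivisors R) R, OreLocalization.numeratorRingHom,
    ?_, ?_, ?_⟩⟩
  · exact OreLocalization.numeratorHom_inj fun c hc => ((hmem c).1 hc).1
  · exact fun c hc => OreLocalization.numerator_isUnit (S := nonZeroDivisors R) ⟨c, (hmem c).2 hc⟩
  · intro q
    induction q using OreLocalization.ind with
    | _ r s => exact ⟨s, r, (hmem s).1 s.2, OreLocalization.mul_cancel⟩

/-- **Corollary (`A3Sep12`).** Let `R` be a left Noetherian ring, `n` its prime radical,
`R̄ = R/n` (realized by a surjective `π` with kernel `n`).  Then `R` has a left Artinian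
left quotient ring iff `R` is `n`-reflective (`C' = C`) and
(a) `R̄` is a left Goldie ring, (b) `n` is a nilpotent ideal,
(d) for every `1 ≤ i ≤ ν` the left `R̄`-module `f_i` contains no infinite direct sum of
nonzero submodules (the range `1 ≤ i ≤ ν` is encoded as `1 ≤ i` and `n^i ≠ ⊥`), and
(e) for every `c̄ ∈ C̄` right multiplication by `c̄` on `f_i` is injective. -/
theorem left_noetherian_left_artinian_left_quotient_ring_criterion
    {R : Type u} [Ring R] [IsNoetherianRing R] (Rbar : Type v) [Ring Rbar] (π : R →+* Rbar)
    (hπsurj : Function.Surjective π) (hπker : RingHom.ker π = primeRadical R) :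
    HasArtinianLeftQuot R ↔
      ((regSet R = {c : R | IsRegElem (π c)}) ∧
        IsLeftGoldie Rbar ∧
        IsNilpotentIdeal (primeRadical R) ∧
        (∀ i : ℕ, 1 ≤ i → primeRadical R ^ i ≠ ⊥ → NoInfiniteIndepFamily R (fMod π i)) ∧
        (∀ i : ℕ, 1 ≤ i → primeRadical R ^ i ≠ ⊥ →
          ∀ c : R, IsRegElem (π c) →
            ∀ (x : R) (hx : x ∈ primeRadical R ^ i) (hxc : x * c ∈ primeRadical R ^ i),
              fMk π i (x * c) hxc = 0 → fMk π i x hx = 0)) := by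
  constructor
  · rintro ⟨⟨Q, φ, h⟩, hArt⟩
    change IsArtinianRing Q at hArt
    have hreg : ∀ {c : R}, IsRegElem (π c) → IsRegElem c := h.isRegElem_of_map hπker
    have hNoeth := h.isNoetherianRing
    have := isNoetherianRing_of_surjective R Rbar π hπsurj
    refine ⟨Set.ext fun c => ⟨h.isRegElem_map hπsurj hπker, hreg⟩,
      isLeftGoldie_of_isNoetherianRing Rbar, isNilpotentIdeal_primeRadical R,
      fun i _ _ => noInfiniteIndepFamily_of_isNoetherian R _, ?_⟩
    intro i _ _ c hc x hx hxc hfx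
    rw [fMk_eq_zero_iff hπsurj hπker] at hfx ⊢
    obtain ⟨d, hd, hdx⟩ := hfx
    have := h.isTwoSided_map (primeRadical R ^ (i + 1))
    have hφ : φ x * φ c ∈ (primeRadical R ^ (i + 1)).map φ := by
      rw [← map_mul]
      exact h.map_mem_map_iff.2 ⟨d, hreg hd, hdx⟩
    obtain ⟨e, he, hex⟩ := h.map_mem_map_iff.1
      (Ideal.mem_of_mul_isUnit_mem _ (h.isUnit c (hreg hc))
        (fun q hq => Ideal.mul_mem_right _ _ hq) hφ)
    exact ⟨e, h.isRegElem_map hπsurj hπker he, hex⟩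
  · rintro ⟨href, -, ⟨k, hk⟩, -, hinj⟩
    have hreg : ∀ c : R, IsRegElem c ↔ IsRegElem (π c) := fun c => Set.ext_iff.1 href c
    obtain ⟨Q, φ, h⟩ := nonempty_leftQuotData_of_ore (R := R) fun a c hc => by
      obtain ⟨d, b, hd, hdb⟩ := exists_ore_mod_pow hπsurj hπker hinj a ((hreg c).1 hc) k
      rw [hk, Submodule.mem_bot, sub_eq_zero] at hdb
      exact ⟨d, b, (hreg d).2 hd, hdb⟩
    exact ⟨⟨Q, φ, h⟩, h.isArtinianRing hπsurj hπker fun c => (hreg c).2⟩
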